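/- Let q : [−1,1] → ℝ be bounded and measurable. For every ν₀ > 0 there exist ε₀ > 0 and a constant C₀ > 0 depending only on ν₀ and ‖q‖_{L^∞} such that for all ε ∈ (0, ε₀) and all u, v ∈ H¹([−1,1]) one has ∫_{−1}^{1} ( u'(r) v(r) − u(r) v'(r) ) q(r) dr ≤ ν₀ ( Q₁(u) + Q₁(v) ) + C₀ ∫_{−1}^{1} ( u(r)² + v(r)² ) dr. -/

import Mathlib

/-!
The profile `ρ₀` satisfies `ρ₀'' = f_B(ρ₀) ρ₀`, so the rescaled profile `θ = ρ₀(· / ε)` is a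
positive zero-energy solution of the Schrödinger operator behind `Q₁`. Its logarithmic derivative
`h = θ' / θ` solves the Riccati equation `h' = ε⁻² f_B(θ) - h²`, which turns `Q₁(u)` into
`∫ (u' - h u)²` up to the boundary terms `h u²`. The one at the right end has a good sign. At the
left end `h(-1)` tends to `0` with `ε`, because `z ρ₀'(z) → 0` as `z → -∞` by convexity of `ρ₀`
there, and so this term is absorbed by a trace inequality for `u(-1)²` in terms of `u' - h u`.
Finally the terms `h u v` cancel in `u' v - u v' = (u' - h u) v - u (v' - h v)`, and Young's
inequality concludes.
-/

open Filter MeasureTheory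

/-- `f_B(ρ) = (ρ² − a²)(ρ² − b²)(2ρ² − a² − b²)`. -/
noncomputable def fB (a b ρ : ℝ) : ℝ :=
  (ρ ^ 2 - a ^ 2) * (ρ ^ 2 - b ^ 2) * (2 * ρ ^ 2 - a ^ 2 - b ^ 2)

/-- The quadratic form `Q₁(u) = ∫_{−1}^{1} (u'(r)² + ε⁻² f_B(ρ₀(r/ε)) u(r)²) dr`, written for
a function `u` with (weak) derivative `g`. -/
noncomputable def Q1 (a b ε : ℝ) (ρ₀ u g : ℝ → ℝ) : ℝ :=
  ∫ r in (-1:ℝ)..1, ((g r) ^ 2 + (ε ^ 2)⁻¹ * fB a b (ρ₀ (r / ε)) * (u r) ^ 2)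

lemma absolutelyContinuousOnInterval_of_eqOn {X : Type*} [PseudoMetricSpace X] {f g : ℝ → X}
    {c d : ℝ} (hf : AbsolutelyContinuousOnInterval f c d) (hfg : Set.EqOn f g (Set.uIcc c d)) :
    AbsolutelyContinuousOnInterval g c d := by
  rw [absolutelyContinuousOnInterval_iff] at hf ⊢
  intro ε hε
  obtain ⟨δ, hδ, hsum⟩ := hf ε hε
  refine ⟨δ, hδ, fun E hE hlen => lt_of_eq_of_lt ?_ (hsum E hE hlen)⟩
  exact Finset.sum_congr rfl fun i hi => by rw [hfg (hE.1 i hi).1, hfg (hE.1 i hi).2]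

/-- `u` is an `H¹` function on the interval between `c` and `d`, with weak derivative `g`, encoded
as: `g` is integrable and square-integrable there and `u` is a primitive of `g`. -/
structure HasH1Deriv (u g : ℝ → ℝ) (c d : ℝ) : Prop where
  intervalIntegrable_deriv : IntervalIntegrable g volume c d
  intervalIntegrable_deriv_sq : IntervalIntegrable (fun r => g r ^ 2) volume c d
  eq_add_integral : ∀ x ∈ Set.uIcc c d, u x = u c + ∫ t in c..x, g t

namespace HasH1Deriv

variable {u g h F m m' : ℝ → ℝ} {c d : ℝ}

lemma of_hasDerivAt (hm : ∀ x ∈ Set.uIcc c d, HasDerivAt m (m' x) x)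
    (hm' : ContinuousOn m' (Set.uIcc c d)) : HasH1Deriv m m' c d where
  intervalIntegrable_deriv := hm'.intervalIntegrable
  intervalIntegrable_deriv_sq := (hm'.pow 2).intervalIntegrable
  eq_add_integral x hx := by
    have hsub : Set.uIcc c x ⊆ Set.uIcc c d := Set.uIcc_subset_uIcc_left hx
    rw [intervalIntegral.integral_eq_sub_of_hasDerivAt (fun y hy => hm y (hsub hy))
      (hm'.mono hsub).intervalIntegrable]
    ring

lemma absolutelyContinuousOnInterval (hu : HasH1Deriv u g c d) :
    AbsolutelyContinuousOnInterval u c d := by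
  have hconst : AbsolutelyContinuousOnInterval (fun _ : ℝ => u c) c d :=
    contDiffOn_const.absolutelyContinuousOnInterval
  have hprim := hu.intervalIntegrable_deriv.absolutelyContinuousOnInterval_intervalIntegral
    (c := c) Set.left_mem_uIcc
  exact absolutelyContinuousOnInterval_of_eqOn (hconst.add hprim)
    fun x hx => (hu.eq_add_integral x hx).symm

lemma continuousOn (hu : HasH1Deriv u g c d) : ContinuousOn u (Set.uIcc c d) :=
  hu.absolutelyContinuousOnInterval.continuousOn

lemma ae_hasDerivAt (hu : HasH1Deriv u g c d) :
    ∀ᵐ x, x ∈ Set.uIoc c d → HasDerivAt u (g x) x := by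
  filter_upwards [hu.intervalIntegrable_deriv.ae_hasDerivAt_integral,
    volume.ae_ne (max c d)] with x hprim hne hx
  have hderiv : HasDerivAt (fun y => u c + ∫ t in c..y, g t) (g x) x :=
    (hprim (Set.uIoc_subset_uIcc hx) c Set.left_mem_uIcc).const_add _
  have hnhds : Set.uIcc c d ∈ nhds x := Icc_mem_nhds hx.1 (lt_of_le_of_ne hx.2 hne)
  exact hderiv.congr_of_eventuallyEq (eventually_of_mem hnhds hu.eq_add_integral)

lemma intervalIntegrable_sub_mul_sq (hu : HasH1Deriv u g c d)
    (hh : ContinuousOn h (Set.uIcc c d)) :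
    IntervalIntegrable (fun r => (g r - h r * u r) ^ 2) volume c d := by
  have hcont := hu.continuousOn
  have hcross : IntervalIntegrable (fun r => g r * (2 * h r * u r)) volume c d :=
    hu.intervalIntegrable_deriv.mul_continuousOn (by fun_prop)
  have hsq : IntervalIntegrable (fun r => (h r * u r) ^ 2) volume c d :=
    ContinuousOn.intervalIntegrable (by fun_prop)
  refine ((hu.intervalIntegrable_deriv_sq.sub hcross).add hsq).congr fun r _ => ?_
  ring

lemma intervalIntegrable_sq (hu : HasH1Deriv u g c d) :
    IntervalIntegrable (fun r => u r ^ 2) volume c d :=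
  (hu.continuousOn.pow 2).intervalIntegrable

lemma intervalIntegrable_deriv_mul_sq (hm : HasH1Deriv m m' c d) (hu : HasH1Deriv u g c d) :
    IntervalIntegrable (fun r => m' r * u r ^ 2 + m r * (2 * u r * g r)) volume c d := by
  have hm_cont := hm.continuousOn
  have hu_cont := hu.continuousOn
  have hright : IntervalIntegrable (fun r => m r * (2 * u r) * g r) volume c d :=
    hu.intervalIntegrable_deriv.continuousOn_mul (by fun_prop)
  refine ((hm.intervalIntegrable_deriv.mul_continuousOn (hu_cont.pow 2)).add hright).congr
    fun r _ => ?_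
  simp only [Pi.pow_apply]
  ring

lemma integral_deriv_mul_sq (hm : HasH1Deriv m m' c d) (hu : HasH1Deriv u g c d) :
    ∫ r in c..d, (m' r * u r ^ 2 + m r * (2 * u r * g r)) = m d * u d ^ 2 - m c * u c ^ 2 := by
  have hu_ac := hu.absolutelyContinuousOnInterval
  rw [sq (u d), sq (u c),
    ← hm.absolutelyContinuousOnInterval.integral_deriv_mul_eq_sub (hu_ac.fun_mul hu_ac)]
  apply intervalIntegral.integral_congr_ae
  filter_upwards [hm.ae_hasDerivAt, hu.ae_hasDerivAt] with x hmx hux hx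
  rw [(hmx hx).deriv, ((hux hx).fun_mul (hux hx)).deriv]
  ring

lemma integral_sq_add_mul_sq_eq_of_riccati (hu : HasH1Deriv u g c d)
    (hh : ∀ x ∈ Set.uIcc c d, HasDerivAt h (F x - h x ^ 2) x)
    (hF : ContinuousOn F (Set.uIcc c d)) :
    ∫ r in c..d, (g r ^ 2 + F r * u r ^ 2) =
      (∫ r in c..d, (g r - h r * u r) ^ 2) + (h d * u d ^ 2 - h c * u c ^ 2) := by
  have hh_cont : ContinuousOn h (Set.uIcc c d) := HasDerivAt.continuousOn hh
  have hh_h1 : HasH1Deriv h (fun r => F r - h r ^ 2) c d := of_hasDerivAt hh (by fun_prop)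
  rw [← hh_h1.integral_deriv_mul_sq hu, ← intervalIntegral.integral_add
    (hu.intervalIntegrable_sub_mul_sq hh_cont) (hh_h1.intervalIntegrable_deriv_mul_sq hu)]
  congr 1 with r
  ring

/-- Since `u` grows along `u' = h u + p` when `0 ≤ h`, only the defect `p = u' - h u` is needed to
control the left trace. -/
lemma sq_left_le_integral (hu : HasH1Deriv u g c d) (hcd : c < d)
    (hh : ContinuousOn h (Set.uIcc c d)) (hh_nonneg : ∀ x ∈ Set.uIcc c d, 0 ≤ h x) :
    u c ^ 2 ≤ ((d - c)⁻¹ + 2) * (∫ r in c..d, u r ^ 2) +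
      1 / 2 * ∫ r in c..d, (g r - h r * u r) ^ 2 := by
  have hlen : 0 < d - c := sub_pos.2 hcd
  have hweight : HasH1Deriv (fun r => (d - r) / (d - c)) (fun _ => -1 / (d - c)) c d :=
    of_hasDerivAt (fun x _ => ((hasDerivAt_id x).const_sub d).div_const _) continuousOn_const
  have htrace := hweight.integral_deriv_mul_sq hu
  simp only [sub_self, zero_div, zero_mul, div_self hlen.ne', one_mul, zero_sub] at htrace
  have hsq := hu.intervalIntegrable_sq.const_mul ((d - c)⁻¹ + 2)
  have hdefect := (hu.intervalIntegrable_sub_mul_sq hh).const_mul (1 / 2)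
  rw [← neg_eq_iff_eq_neg.2 htrace, ← intervalIntegral.integral_neg,
    ← intervalIntegral.integral_const_mul, ← intervalIntegral.integral_const_mul,
    ← intervalIntegral.integral_add hsq hdefect]
  refine intervalIntegral.integral_mono_on hcd.le
    (hweight.intervalIntegrable_deriv_mul_sq hu).neg (hsq.add hdefect) fun r hr => ?_
  have hm_nonneg : 0 ≤ (d - r) / (d - c) := div_nonneg (sub_nonneg.2 hr.2) hlen.le
  have hm_le_one : (d - r) / (d - c) ≤ 1 := (div_le_one hlen).2 (by linarith [hr.1])
  have hgrowth := mul_nonneg (mul_nonneg hm_nonneg (hh_nonneg r (Set.Icc_subset_uIcc hr)))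
    (sq_nonneg (u r))
  have hyoung := mul_nonneg hm_nonneg (sq_nonneg (2 * u r + (g r - h r * u r)))
  have hslack := mul_nonneg (sub_nonneg.2 hm_le_one)
    (add_nonneg (mul_nonneg four_pos.le (sq_nonneg (u r))) (sq_nonneg (g r - h r * u r)))
  rw [neg_div, one_div]
  linarith

lemma half_integral_defect_sq_le_of_riccati (hu : HasH1Deriv u g c d) (hcd : c < d)
    (hh : ∀ x ∈ Set.uIcc c d, HasDerivAt h (F x - h x ^ 2) x)
    (hF : ContinuousOn F (Set.uIcc c d)) (hh_nonneg : ∀ x ∈ Set.uIcc c d, 0 ≤ h x)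
    (hh_left : h c ≤ 1) :
    1 / 2 * (∫ r in c..d, (g r - h r * u r) ^ 2) - ((d - c)⁻¹ + 2) * ∫ r in c..d, u r ^ 2 ≤
      ∫ r in c..d, (g r ^ 2 + F r * u r ^ 2) := by
  have htrace := hu.sq_left_le_integral hcd (HasDerivAt.continuousOn hh) hh_nonneg
  have hleft : h c * u c ^ 2 ≤ u c ^ 2 := mul_le_of_le_one_left (sq_nonneg _) hh_left
  have hright : 0 ≤ h d * u d ^ 2 := mul_nonneg (hh_nonneg d Set.right_mem_uIcc) (sq_nonneg _)
  rw [hu.integral_sq_add_mul_sq_eq_of_riccati hh hF]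
  linarith

end HasH1Deriv

lemma mul_mul_le_young {ν M s : ℝ} (hν : 0 < ν) (hs : |s| ≤ M) (x y : ℝ) :
    x * y * s ≤ ν / 2 * x ^ 2 + M ^ 2 / (2 * ν) * y ^ 2 := by
  have hsM : s ^ 2 ≤ M ^ 2 := sq_le_sq' (abs_le.1 hs).1 (abs_le.1 hs).2
  calc x * y * s ≤ ν / 2 * x ^ 2 + s ^ 2 / (2 * ν) * y ^ 2 := by
        rw [← sub_nonneg]
        have hsquare : ν / 2 * x ^ 2 + s ^ 2 / (2 * ν) * y ^ 2 - x * y * s =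
            (ν * x - y * s) ^ 2 / (2 * ν) := by
          field_simp
          ring
        rw [hsquare]
        positivity
    _ ≤ ν / 2 * x ^ 2 + M ^ 2 / (2 * ν) * y ^ 2 := by gcongr

section CrossTerm

variable {u gu v gv h F q : ℝ → ℝ} {c d ν M : ℝ}

lemma intervalIntegrable_cross_mul (hcd : c ≤ d) (hu : HasH1Deriv u gu c d)
    (hv : HasH1Deriv v gv c d) (hq : AEStronglyMeasurable q (volume.restrict (Set.Icc c d)))
    (hqM : ∀ᵐ r ∂volume.restrict (Set.Icc c d), |q r| ≤ M) :
    IntervalIntegrable (fun r => (gu r * v r - u r * gv r) * q r) volume c d := by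
  have hcross : IntervalIntegrable (fun r => gu r * v r - u r * gv r) volume c d :=
    (hu.intervalIntegrable_deriv.mul_continuousOn hv.continuousOn).sub
      (hv.intervalIntegrable_deriv.continuousOn_mul hu.continuousOn)
  rw [intervalIntegrable_iff_integrableOn_Icc_of_le hcd] at hcross ⊢
  exact Integrable.mul_bdd hcross hq hqM

lemma integral_cross_mul_le (hcd : c ≤ d) (hν : 0 < ν) (hu : HasH1Deriv u gu c d)
    (hv : HasH1Deriv v gv c d) (hh : ContinuousOn h (Set.uIcc c d))
    (hq : AEStronglyMeasurable q (volume.restrict (Set.Icc c d)))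
    (hqM : ∀ᵐ r ∂volume.restrict (Set.Icc c d), |q r| ≤ M) :
    ∫ r in c..d, (gu r * v r - u r * gv r) * q r ≤
      ν / 2 * ((∫ r in c..d, (gu r - h r * u r) ^ 2) + ∫ r in c..d, (gv r - h r * v r) ^ 2) +
        M ^ 2 / (2 * ν) * ∫ r in c..d, (u r ^ 2 + v r ^ 2) := by
  have hpu := hu.intervalIntegrable_sub_mul_sq hh
  have hpv := hv.intervalIntegrable_sub_mul_sq hh
  have hp := (hpu.add hpv).const_mul (ν / 2)
  have hsq := (hu.intervalIntegrable_sq.add hv.intervalIntegrable_sq).const_mul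
    (M ^ 2 / (2 * ν))
  rw [← intervalIntegral.integral_add hpu hpv, ← intervalIntegral.integral_const_mul,
    ← intervalIntegral.integral_const_mul, ← intervalIntegral.integral_add hp hsq]
  refine intervalIntegral.integral_mono_ae_restrict hcd
    (intervalIntegrable_cross_mul hcd hu hv hq hqM) (hp.add hsq) ?_
  filter_upwards [hqM] with r hr
  have hdefect : (gu r * v r - u r * gv r) * q r =
      (gu r - h r * u r) * v r * q r + (gv r - h r * v r) * u r * -q r := by ring
  have hyoung_u := mul_mul_le_young hν hr (gu r - h r * u r) (v r)
  have hyoung_v := mul_mul_le_young hν ((abs_neg _).trans_le hr) (gv r - h r * v r) (u r)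
  rw [hdefect]
  linarith

lemma integral_cross_mul_le_of_riccati (hcd : c < d) (hν : 0 < ν)
    (hh : ∀ x ∈ Set.uIcc c d, HasDerivAt h (F x - h x ^ 2) x)
    (hF : ContinuousOn F (Set.uIcc c d)) (hh_nonneg : ∀ x ∈ Set.uIcc c d, 0 ≤ h x)
    (hh_left : h c ≤ 1) (hu : HasH1Deriv u gu c d) (hv : HasH1Deriv v gv c d)
    (hq : AEStronglyMeasurable q (volume.restrict (Set.Icc c d)))
    (hqM : ∀ᵐ r ∂volume.restrict (Set.Icc c d), |q r| ≤ M) :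
    ∫ r in c..d, (gu r * v r - u r * gv r) * q r ≤
      ν * ((∫ r in c..d, (gu r ^ 2 + F r * u r ^ 2)) + ∫ r in c..d, (gv r ^ 2 + F r * v r ^ 2)) +
        (M ^ 2 / (2 * ν) + ν * ((d - c)⁻¹ + 2)) * ∫ r in c..d, (u r ^ 2 + v r ^ 2) := by
  have hcross := integral_cross_mul_le hcd.le hν hu hv (HasDerivAt.continuousOn hh) hq hqM
  have hcoercive := mul_le_mul_of_nonneg_left (add_le_add
    (hu.half_integral_defect_sq_le_of_riccati hcd hh hF hh_nonneg hh_left)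
    (hv.half_integral_defect_sq_le_of_riccati hcd hh hF hh_nonneg hh_left)) hν.le
  rw [intervalIntegral.integral_add hu.intervalIntegrable_sq
    hv.intervalIntegrable_sq] at hcross ⊢
  linarith

end CrossTerm

/-- Squeeze `-z f'(z)` between `f z - f (2 z)` and `2 (f (z / 2) - f z)`, the differences given by
the slopes of `f` on `[2 z, z]` and on `[z, z / 2]`. -/
lemma tendsto_mul_deriv_atBot_of_convexOn {f f' : ℝ → ℝ} {N l : ℝ}
    (hf : ConvexOn ℝ (Set.Iic N) f) (hf' : ∀ z < N, HasDerivAt f (f' z) z)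
    (hlim : Tendsto f atBot (nhds l)) : Tendsto (fun z => z * f' z) atBot (nhds 0) := by
  have hdouble : Tendsto (fun z => f (2 * z) - f z) atBot (nhds 0) := by
    simpa only [sub_self, id_eq, Function.comp_def] using
      (hlim.comp (tendsto_id.const_mul_atBot two_pos)).sub hlim
  have hhalf : Tendsto (fun z => 2 * (f z - f (z / 2))) atBot (nhds 0) := by
    simpa only [sub_self, mul_zero, id_eq, Function.comp_def] using
      (hlim.sub (hlim.comp (tendsto_id.atBot_div_const two_pos))).const_mul 2
  refine tendsto_of_tendsto_of_tendsto_of_le_of_le' hhalf hdouble ?_ ?_ <;>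
    filter_upwards [eventually_lt_atBot 0, eventually_lt_atBot (2 * N),
      eventually_lt_atBot N] with z hz hzN2 hzN
  · have hslope : f' z ≤ slope f z (z / 2) :=
      hf.le_slope_of_hasDerivAt hzN.le (Set.mem_Iic.2 (by linarith)) (by linarith) (hf' z hzN)
    rw [slope_def_field, le_div_iff₀ (by linarith)] at hslope
    linarith
  · have hslope : slope f (2 * z) z ≤ f' z :=
      hf.slope_le_of_hasDerivAt (Set.mem_Iic.2 (by linarith)) hzN.le (by linarith) (hf' z hzN)
    rw [slope_def_field, div_le_iff₀ (by linarith)] at hslope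
    linarith

/-- `ρ` is a positive nondecreasing solution of `ρ'' = V ρ`, with derivative `ρ'` and continuous
potential `V`; its logarithmic derivative drives the factorization of `-∂² + V`. -/
structure IsMonotoneGroundState (V ρ ρ' : ℝ → ℝ) : Prop where
  hasDerivAt : ∀ z, HasDerivAt ρ (ρ' z) z
  hasDerivAt_deriv : ∀ z, HasDerivAt ρ' (V z * ρ z) z
  continuous_potential : Continuous V
  pos : ∀ z, 0 < ρ z
  deriv_nonneg : ∀ z, 0 ≤ ρ' z

namespace IsMonotoneGroundState

variable {V ρ ρ' : ℝ → ℝ}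

lemma hasDerivAt_logDeriv (hρ : IsMonotoneGroundState V ρ ρ') (z : ℝ) :
    HasDerivAt (fun z => ρ' z / ρ z) (V z - (ρ' z / ρ z) ^ 2) z := by
  have hne : ρ z ≠ 0 := (hρ.pos z).ne'
  refine ((hρ.hasDerivAt_deriv z).fun_div (hρ.hasDerivAt z) hne).congr_deriv ?_
  field_simp

lemma rescale (hρ : IsMonotoneGroundState V ρ ρ') {ε : ℝ} (hε : 0 < ε) :
    IsMonotoneGroundState (fun r => (ε ^ 2)⁻¹ * V (r / ε)) (fun r => ρ (r / ε))
      (fun r => ρ' (r / ε) / ε) where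
  hasDerivAt r := by
    refine ((hρ.hasDerivAt (r / ε)).comp r ((hasDerivAt_id r).div_const ε)).congr_deriv ?_
    rw [mul_one_div]
  hasDerivAt_deriv r := by
    refine (((hρ.hasDerivAt_deriv (r / ε)).comp r
      ((hasDerivAt_id r).div_const ε)).div_const ε).congr_deriv ?_
    field_simp
  continuous_potential := by
    have hV := hρ.continuous_potential
    fun_prop
  pos r := hρ.pos _
  deriv_nonneg r := div_nonneg (hρ.deriv_nonneg _) hε.le

lemma tendsto_mul_logDeriv_atBot (hρ : IsMonotoneGroundState V ρ ρ')
    (hV : ∀ᶠ z in atBot, 0 ≤ V z) {l : ℝ} (hl : l ≠ 0) (hlim : Tendsto ρ atBot (nhds l)) :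
    Tendsto (fun z => z * (ρ' z / ρ z)) atBot (nhds 0) := by
  obtain ⟨N, hN⟩ := eventually_atBot.1 hV
  have hconvex : ConvexOn ℝ (Set.Iic N) ρ :=
    convexOn_of_hasDerivWithinAt2_nonneg (convex_Iic N)
      (HasDerivAt.continuousOn fun z _ => hρ.hasDerivAt z)
      (fun z _ => (hρ.hasDerivAt z).hasDerivWithinAt)
      (fun z _ => (hρ.hasDerivAt_deriv z).hasDerivWithinAt)
      (fun z hz => mul_nonneg (hN z (interior_subset (s := Set.Iic N) hz)) (hρ.pos z).le)
  have hderiv := tendsto_mul_deriv_atBot_of_convexOn hconvex (fun z _ => hρ.hasDerivAt z) hlim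
  simpa only [zero_div, Pi.div_def, mul_div_assoc] using hderiv.div hlim hl

lemma eventually_logDeriv_rescale_le_one (hρ : IsMonotoneGroundState V ρ ρ')
    (hV : ∀ᶠ z in atBot, 0 ≤ V z) {l : ℝ} (hl : l ≠ 0) (hlim : Tendsto ρ atBot (nhds l))
    {c : ℝ} (hc : c < 0) :
    ∀ᶠ ε in nhdsWithin (0 : ℝ) (Set.Ioi 0), ρ' (c / ε) / ε / ρ (c / ε) ≤ 1 := by
  have hscale : Tendsto (fun ε : ℝ => c / ε) (nhdsWithin 0 (Set.Ioi 0)) atBot :=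
    tendsto_inv_nhdsGT_zero.const_mul_atTop_of_neg hc
  have hsmall := ((hρ.tendsto_mul_logDeriv_atBot hV hl hlim).comp hscale).eventually_const_le hc
  filter_upwards [hsmall] with ε hε
  have hcancel : c / ε * (ρ' (c / ε) / ρ (c / ε)) = c * (ρ' (c / ε) / ε / ρ (c / ε)) := by ring
  rw [Function.comp_apply, hcancel] at hε
  exact (mul_le_mul_left_of_neg hc).1 (by rwa [mul_one])

end IsMonotoneGroundState

theorem statement19_general {V ρ ρ' : ℝ → ℝ} (hρ : IsMonotoneGroundState V ρ ρ')
    (hV : ∀ᶠ z in atBot, 0 ≤ V z) {l : ℝ} (hl : l ≠ 0) (hlim : Tendsto ρ atBot (nhds l))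
    {c d : ℝ} (hc : c < 0) (hcd : c < d) {ν₀ : ℝ} (hν₀ : 0 < ν₀) (M : ℝ) :
    ∃ ε₀ > (0 : ℝ), ∃ C₀ > (0 : ℝ), ∀ q : ℝ → ℝ,
      AEStronglyMeasurable q (volume.restrict (Set.Icc c d)) →
      (∀ᵐ r ∂volume.restrict (Set.Icc c d), |q r| ≤ M) →
      ∀ ε ∈ Set.Ioo (0 : ℝ) ε₀, ∀ u gu v gv : ℝ → ℝ,
      HasH1Deriv u gu c d → HasH1Deriv v gv c d →
      (∫ r in c..d, (gu r * v r - u r * gv r) * q r) ≤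
        ν₀ * ((∫ r in c..d, (gu r ^ 2 + (ε ^ 2)⁻¹ * V (r / ε) * u r ^ 2)) +
            ∫ r in c..d, (gv r ^ 2 + (ε ^ 2)⁻¹ * V (r / ε) * v r ^ 2)) +
          C₀ * ∫ r in c..d, (u r ^ 2 + v r ^ 2) := by
  obtain ⟨ε₀, hε₀, hleft⟩ := mem_nhdsGT_iff_exists_Ioo_subset.1
    (hρ.eventually_logDeriv_rescale_le_one hV hl hlim hc)
  have hC₀ : 0 < M ^ 2 / (2 * ν₀) + ν₀ * ((d - c)⁻¹ + 2) := by
    have := sub_pos.2 hcd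
    positivity
  refine ⟨ε₀, hε₀, _, hC₀, ?_⟩
  intro q hq hqM ε hε u gu v gv hu hv
  have hθ := hρ.rescale hε.1
  exact integral_cross_mul_le_of_riccati hcd hν₀ (fun x _ => hθ.hasDerivAt_logDeriv x)
    hθ.continuous_potential.continuousOn
    (fun x _ => div_nonneg (hθ.deriv_nonneg x) (hθ.pos x).le) (hleft hε) hu hv hq hqM

section Profile

variable {a b : ℝ} {ρ : ℝ → ℝ}

lemma isMonotoneGroundState_fB (ha : 0 < a)
    (hρ : ∀ z, HasDerivAt ρ (Real.sqrt 2 / 2 * (ρ z ^ 2 - a ^ 2) * (b ^ 2 - ρ z ^ 2)) z)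
    (hbnd : ∀ z, a < ρ z ∧ ρ z < b) :
    IsMonotoneGroundState (fun z => fB a b (ρ z)) ρ
      (fun z => Real.sqrt 2 / 2 * (ρ z ^ 2 - a ^ 2) * (b ^ 2 - ρ z ^ 2)) where
  hasDerivAt := hρ
  hasDerivAt_deriv z := by
    have hsq := (hρ z).fun_pow 2
    refine (((hsq.sub_const (a ^ 2)).const_mul (Real.sqrt 2 / 2)).fun_mul
      (hsq.const_sub (b ^ 2))).congr_deriv ?_
    have hsqrt : Real.sqrt 2 ^ 2 = 2 := Real.sq_sqrt two_pos.le
    unfold fB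
    push_cast
    linear_combination (1 / 2 * (ρ z ^ 2 - a ^ 2) * (b ^ 2 - ρ z ^ 2) *
      (a ^ 2 + b ^ 2 - 2 * ρ z ^ 2) * ρ z) * hsqrt
  continuous_potential := by
    have hcont : Continuous ρ := continuous_iff_continuousAt.2 fun z => (hρ z).continuousAt
    unfold fB
    fun_prop
  pos z := ha.trans (hbnd z).1
  deriv_nonneg z := by
    have hpos : 0 < ρ z := ha.trans (hbnd z).1
    have hleft : 0 ≤ ρ z ^ 2 - a ^ 2 := sub_nonneg.2 (by gcongr; exact (hbnd z).1.le)
    have hright : 0 ≤ b ^ 2 - ρ z ^ 2 := sub_nonneg.2 (by gcongr; exact (hbnd z).2.le)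
    positivity

lemma eventually_fB_nonneg (ha : 0 < a) (hab : a < b) (hbnd : ∀ z, a < ρ z ∧ ρ z < b)
    (hbot : Tendsto ρ atBot (nhds a)) : ∀ᶠ z in atBot, 0 ≤ fB a b (ρ z) := by
  have hmid : a ^ 2 < (a ^ 2 + b ^ 2) / 2 := by linarith [pow_lt_pow_left₀ hab ha.le two_ne_zero]
  filter_upwards [(hbot.pow 2).eventually_lt_const hmid] with z hz
  have hpos : 0 < ρ z := ha.trans (hbnd z).1
  have hleft : 0 ≤ ρ z ^ 2 - a ^ 2 := sub_nonneg.2 (by gcongr; exact (hbnd z).1.le)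
  have hright : ρ z ^ 2 - b ^ 2 ≤ 0 := sub_nonpos.2 (by gcongr; exact (hbnd z).2.le)
  exact mul_nonneg_of_nonpos_of_nonpos (mul_nonpos_of_nonneg_of_nonpos hleft hright) (by linarith)

end Profile

/-- (Cross-term estimate.) For every `ν₀ > 0` and every bound `M > 0` on
`‖q‖_{L^∞}`, there exist `ε₀ > 0` and `C₀ > 0` (depending only on `ν₀` and `M`) such that
for every bounded measurable `q : [−1,1] → ℝ` with `|q| ≤ M`, all `ε ∈ (0, ε₀)` and all
`u, v ∈ H¹([−1,1])` (with derivatives `gu, gv`):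
`∫_{−1}^{1} (u'v − uv') q ≤ ν₀ (Q₁(u) + Q₁(v)) + C₀ ∫_{−1}^{1} (u² + v²)`. -/
theorem statement19 (a b α : ℝ) (ha : 0 < a) (hab : a < b)
    (hα : 0 < α)
    (hα' : α < min (Real.sqrt 2 * (b ^ 2 - a ^ 2) * a) (Real.sqrt 2 * (b ^ 2 - a ^ 2) * b))
    (ρ₀ : ℝ → ℝ) (hreg : ContDiff ℝ 1 ρ₀)
    (hderiv : ∀ z, deriv ρ₀ z =
      Real.sqrt 2 / 2 * ((ρ₀ z) ^ 2 - a ^ 2) * (b ^ 2 - (ρ₀ z) ^ 2))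
    (hbnd : ∀ z, a < ρ₀ z ∧ ρ₀ z < b)
    (hbot : Filter.Tendsto ρ₀ Filter.atBot (nhds a))
    (htop : Filter.Tendsto ρ₀ Filter.atTop (nhds b))
    (hnorm : b * Real.log ((ρ₀ 0 - a) / (ρ₀ 0 + a))
      - a * Real.log ((b - ρ₀ 0) / (b + ρ₀ 0)) = 0)
    (ν₀ M : ℝ) (hν₀ : 0 < ν₀) (hM : 0 < M) :
    ∃ ε₀ > (0:ℝ), ∃ C₀ > (0:ℝ), ∀ q : ℝ → ℝ, Measurable q →
      (∀ r ∈ Set.Icc (-1:ℝ) 1, |q r| ≤ M) →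
      ∀ ε ∈ Set.Ioo (0:ℝ) ε₀, ∀ u gu v gv : ℝ → ℝ,
      IntervalIntegrable gu volume (-1) 1 →
      IntervalIntegrable (fun r => (gu r) ^ 2) volume (-1) 1 →
      (∀ x ∈ Set.Icc (-1:ℝ) 1, u x = u (-1) + ∫ t in (-1:ℝ)..x, gu t) →
      IntervalIntegrable gv volume (-1) 1 →
      IntervalIntegrable (fun r => (gv r) ^ 2) volume (-1) 1 →
      (∀ x ∈ Set.Icc (-1:ℝ) 1, v x = v (-1) + ∫ t in (-1:ℝ)..x, gv t) →
      (∫ r in (-1:ℝ)..1, (gu r * v r - u r * gv r) * q r) ≤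
        ν₀ * (Q1 a b ε ρ₀ u gu + Q1 a b ε ρ₀ v gv)
          + C₀ * ∫ r in (-1:ℝ)..1, ((u r) ^ 2 + (v r) ^ 2) := by
  have hd (z : ℝ) := hderiv z ▸ (hreg.differentiable one_ne_zero z).hasDerivAt
  obtain ⟨ε₀, hε₀, C₀, hC₀, hcross⟩ := statement19_general (isMonotoneGroundState_fB ha hd hbnd)
    (eventually_fB_nonneg ha hab hbnd hbot) ha.ne' hbot (neg_one_lt_zero (R := ℝ))
    (neg_lt_self one_pos) hν₀ M
  rw [← Set.uIcc_of_le (neg_le_self zero_le_one)] at hcross ⊢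
  refine ⟨ε₀, hε₀, C₀, hC₀, fun q hq hqM ε hε u gu v gv hgu hgu2 hu hgv hgv2 hv => ?_⟩
  exact hcross q hq.aestronglyMeasurable (ae_restrict_of_forall_mem measurableSet_uIcc hqM) ε hε
    u gu v gv ⟨hgu, hgu2, hu⟩ ⟨hgv, hgv2, hv⟩
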